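/- arXiv:2006.00353 — 2 statements merged into one kernel-verified Lean document; each statement's English description precedes it below -/
import Mathlib

section
/- Let G act regularly on the point set of a partial geometry S of order (s,t,α); fix a point O and let Δ = {g ∈ G : O^g is collinear with O} ∪ {1}. Then for every nontrivial x ∈ G there is an integer u_x such that the number d₁(x) of points mapped by x to distinct collinear points satisfies d₁(x) = (s+1)(t+1) + u_x(s+t−α+1) = |x^G ∩ Δ|·|C_G(x)|, and moreover |x^G ∩ Δᶜ|·|C_G(x)| = t(s+1)(s−α)/α − u_x(s+t−α+1). -/
/-- A partial geometry `pg(s,t,α)`. -/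
structure IsPartialGeometry {P L : Type*} (incid : P → L → Prop) (s t a : ℕ) : Prop where
  point_lines : ∀ p : P, Nat.card {l : L | incid p l} = t + 1
  line_points : ∀ l : L, Nat.card {p : P | incid p l} = s + 1
  unique_line : ∀ p q : P, p ≠ q → Set.Subsingleton {l : L | incid p l ∧ incid q l}
  unique_point : ∀ l l' : L, l ≠ l' → Set.Subsingleton {p : P | incid p l ∧ incid p l'}
  alpha_count : ∀ (p : P) (l : L), ¬ incid p l →
    Nat.card {q : P | incid q l ∧ q ≠ p ∧ ∃ l', incid p l' ∧ incid q l'} = a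

/-- Two points are collinear if they are distinct and lie on a common line. -/
def CollinearPts {P L : Type*} (incid : P → L → Prop) (p q : P) : Prop :=
  p ≠ q ∧ ∃ l, incid p l ∧ incid q l

theorem pg_aux_trace_integral {n : Type*} [Fintype n] [DecidableEq n] (E X : Matrix n n ℂ)
    (hE : E * E = E) (hc : Commute E X) (k : ℕ) (hX : X ^ k = 1) :
    (hk : 0 < k) → IsIntegral ℤ (Matrix.trace (E * X)) := by
  intro hk
  have hB : (E * X) ^ (k + 1) = E * X := by
    have hi : IsIdempotentElem E := hE
    rw [hc.mul_pow, hi.pow_succ_eq, pow_succ, hX, one_mul]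
  rw [Matrix.trace_eq_sum_roots_charpoly]
  refine IsIntegral.multiset_sum fun r hr => ?_
  have hr' := Polynomial.isRoot_of_mem_roots hr
  have hs := Matrix.mem_spectrum_of_isRoot_charpoly hr'
  rw [← Matrix.spectrum_toLin', ← Module.End.hasEigenvalue_iff_mem_spectrum] at hs
  obtain ⟨v, hv⟩ := hs.exists_hasEigenvector
  have h1 := hv.pow_apply (k + 1)
  rw [← Matrix.toLin'_pow, hB, hv.apply_eq_smul] at h1
  have h2 : r = r ^ (k + 1) := smul_left_injective ℂ hv.2 h1
  refine ⟨Polynomial.X ^ (k + 1) - Polynomial.X, ?_, ?_⟩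
  · apply Polynomial.monic_X_pow_sub
    rw [Polynomial.degree_X]
    exact_mod_cast (show 1 < k + 1 by omega)
  · simp [← h2]

theorem pg_aux_abstract {n : Type*} [Fintype n] [DecidableEq n] (M : Matrix n n ℂ)
    (K m d : ℤ) (b : ℂ) (hm : m ≠ 0) (hv : Fintype.card n ≠ 0)
    (hM2 : M * M = (m : ℂ) • M + b • Matrix.of (fun _ _ => (1 : ℂ)))
    (hMJ : M * Matrix.of (fun _ _ => (1 : ℂ)) = (K : ℂ) • Matrix.of (fun _ _ => (1 : ℂ)))
    (hJM : Matrix.of (fun _ _ => (1 : ℂ)) * M = (K : ℂ) • Matrix.of (fun _ _ => (1 : ℂ)))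
    (hb : b * (Fintype.card n : ℂ) = K * (K - m))
    (σ : Equiv.Perm n) (hσ : ∀ p q, M (σ p) (σ q) = M p q)
    (hd : ∑ p, M p (σ p) = d) :
    ∃ u : ℤ, d = K + u * m := by
  set J : Matrix n n ℂ := Matrix.of (fun _ _ => (1 : ℂ)) with hJ
  have hJJ : J * J = (Fintype.card n : ℂ) • J := by
    ext i j; simp [hJ, Matrix.mul_apply]
  have hv' : (Fintype.card n : ℂ) ≠ 0 := by exact_mod_cast hv
  have hm' : (m : ℂ) ≠ 0 := by exact_mod_cast hm
  set v : ℂ := (Fintype.card n : ℂ) with hvdef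
  set E : Matrix n n ℂ := (m : ℂ)⁻¹ • (M - (K / v : ℂ) • J) with hE
  set X : Matrix n n ℂ := σ⁻¹.permMatrix ℂ with hX
  have hEE : E * E = E := by
    rw [hE]
    simp only [Matrix.smul_mul, Matrix.mul_smul, sub_mul, mul_sub, hM2, hMJ, hJM, hJJ]
    have hb' : b = K * (K - m) / v := by field_simp; linear_combination hb
    rw [hb']
    ext i j
    simp [hJ]
    field_simp
    ring_nf
    simp
  have hXE : Commute E X := by
    have hEσ : ∀ p q, E (σ p) (σ q) = E p q := by
      intro p q; simp [hE, hJ, hσ]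
    show E * X = X * E
    rw [hX, Equiv.Perm.permMatrix, PEquiv.toMatrix_toPEquiv_mul, PEquiv.mul_toMatrix_toPEquiv]
    ext p q
    have := hEσ (σ⁻¹ p) q
    rw [show σ (σ⁻¹ p) = p from σ.apply_symm_apply p] at this
    exact this
  have hXk : X ^ (orderOf σ) = 1 := by
    have h1 := map_pow (Matrix.permMatrixHom (R := ℂ) (n := n)) σ (orderOf σ)
    rw [pow_orderOf_eq_one, map_one] at h1
    exact h1.symm
  have hint := pg_aux_trace_integral E X hEE hXE _ hXk (orderOf_pos σ)
  have htr : Matrix.trace (E * X) = (m : ℂ)⁻¹ * (d - K) := by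
    rw [hX, Equiv.Perm.permMatrix, PEquiv.mul_toMatrix_toPEquiv, Matrix.trace]
    have h4 : ∀ p, (E.submatrix id (σ⁻¹).symm).diag p = (m : ℂ)⁻¹ * (M p (σ p) - K / v) := by
      intro p
      have : (σ⁻¹).symm p = σ p := rfl
      simp only [Matrix.diag_apply, Matrix.submatrix_apply, id, this]
      simp [hE, hJ]
    rw [Finset.sum_congr rfl (fun p _ => h4 p), ← Finset.mul_sum, Finset.sum_sub_distrib, hd]
    simp only [Finset.sum_const, Finset.card_univ, nsmul_eq_mul, ← hvdef]
    field_simp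
  rw [htr] at hint
  have h3 : (m : ℂ)⁻¹ * (d - K) = algebraMap ℚ ℂ ((m : ℚ)⁻¹ * (d - K)) := by simp
  rw [h3, isIntegral_algebraMap_iff (algebraMap ℚ ℂ).injective] at hint
  obtain ⟨u, hu⟩ := IsIntegrallyClosed.isIntegral_iff.1 hint
  refine ⟨u, ?_⟩
  have hmq : (m : ℚ) ≠ 0 := by exact_mod_cast hm
  have : (d : ℚ) = K + u * m := by
    simp at hu
    rw [hu]; field_simp; ring
  exact_mod_cast this

theorem pg_aux_conj_count {G : Type*} [Group G] [Fintype G] (x : G) (S : Set G) :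
    Set.ncard {g : G | g * x * g⁻¹ ∈ S} =
      Set.ncard ({y : G | ∃ g : G, g * x * g⁻¹ = y} ∩ S) *
        Nat.card ↥(Subgroup.centralizer ({x} : Set G)) := by
  classical
  rw [Set.ncard_eq_toFinset_card', Set.ncard_eq_toFinset_card']
  rw [Finset.card_eq_sum_card_fiberwise (f := fun g => g * x * g⁻¹)
    (t := ({y : G | ∃ g : G, g * x * g⁻¹ = y} ∩ S).toFinset)]
  · rw [Finset.sum_const_nat]
    intro y hy
    simp only [Set.mem_toFinset, Set.mem_inter_iff, Set.mem_ofPred_eq] at hy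
    obtain ⟨⟨g0, rfl⟩, hS⟩ := hy
    rw [Nat.card_eq_fintype_card, Fintype.card_subtype]
    refine Finset.card_bij' (fun g _ => g0⁻¹ * g) (fun c _ => g0 * c) ?_ ?_ ?_ ?_
    · intro g hg
      simp only [Finset.mem_filter, Set.mem_toFinset] at hg
      simp only [Finset.mem_filter, Finset.mem_univ, true_and, Subgroup.mem_centralizer_singleton_iff]
      have h1 := hg.2
      have h2 : g * x = g0 * x * g0⁻¹ * g := by rw [← h1]; group
      rw [mul_assoc, h2]; group
    · intro c hc
      simp only [Finset.mem_filter, Finset.mem_univ, true_and,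
        Subgroup.mem_centralizer_singleton_iff] at hc
      have h1 : g0 * c * x * (g0 * c)⁻¹ = g0 * x * g0⁻¹ := by
        rw [mul_assoc g0 c x, hc]; group
      simp only [Finset.mem_filter, Set.mem_toFinset]
      refine ⟨?_, h1⟩
      show g0 * c * x * (g0 * c)⁻¹ ∈ S
      rw [h1]; exact hS
    · intro g _; group
    · intro g _; group
  · intro g hg
    simp at hg ⊢
    exact hg

theorem pg_aux_MN {P L : Type*} [Fintype P] [Fintype L] [DecidableEq P]
    (incid : P → L → Prop) [∀ p l, Decidable (incid p l)] (s t a : ℕ)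
    (h : IsPartialGeometry incid s t a) (N : Matrix P L ℂ)
    (hN : N = Matrix.of fun p l => if incid p l then (1 : ℂ) else 0) :
    (∀ p, ∑ l, N p l = t + 1) ∧ (∀ l, ∑ p, N p l = s + 1) ∧
    (∀ p, (N * N.transpose) p p = t + 1) ∧
    (∀ p q, p ≠ q → (CollinearPts incid p q → (N * N.transpose) p q = 1) ∧
      (¬ CollinearPts incid p q → (N * N.transpose) p q = 0)) ∧
    (N * N.transpose * N =
      ((s : ℂ) + t - a + 1) • N + (a : ℂ) • Matrix.of (fun _ _ => (1 : ℂ))) := by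
  classical
  have h1 : ∀ p, ∑ l, N p l = t + 1 := by
    intro p
    have := h.point_lines p
    rw [Nat.card_eq_fintype_card, Fintype.card_subtype] at this
    simp only [hN, Matrix.of_apply, Finset.sum_boole]
    exact_mod_cast this
  have h2 : ∀ l, ∑ p, N p l = s + 1 := by
    intro p
    have := h.line_points p
    rw [Nat.card_eq_fintype_card, Fintype.card_subtype] at this
    simp only [hN, Matrix.of_apply, Finset.sum_boole]
    exact_mod_cast this
  have h3 : ∀ p, (N * N.transpose) p p = t + 1 := by
    intro p
    rw [← h1 p, Matrix.mul_apply]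
    refine Finset.sum_congr rfl fun l _ => ?_
    simp [hN]
  have h4 : ∀ p q, p ≠ q → (CollinearPts incid p q → (N * N.transpose) p q = 1) ∧
      (¬ CollinearPts incid p q → (N * N.transpose) p q = 0) := by
    intro p q hpq
    constructor
    · rintro ⟨_, l, hp, hq⟩
      rw [Matrix.mul_apply, Finset.sum_eq_single l]
      · simp [hN, hp, hq]
      · intro l' _ hl'
        by_contra hc
        apply hl'
        refine h.unique_line p q hpq ?_ ⟨hp, hq⟩
        simp [hN] at hc
        exact ⟨hc.2, hc.1⟩
      · simp
    · intro hc
      rw [Matrix.mul_apply]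
      refine Finset.sum_eq_zero fun l _ => ?_
      by_contra hne
      simp [hN] at hne
      exact hc ⟨hpq, l, hne.2, hne.1⟩
  refine ⟨h1, h2, h3, h4, ?_⟩
  ext p l
  rw [Matrix.mul_apply]
  by_cases hpl : incid p l
  · have : ∀ q, (N * N.transpose) p q * N q l = N q l + if p = q then (t : ℂ) else 0 := by
      intro q
      by_cases hpq : p = q
      · subst hpq
        rw [h3]; simp [hN, hpl]; ring
      · by_cases hq : incid q l
        · rw [(h4 p q hpq).1 ⟨hpq, l, hpl, hq⟩]; simp [hpq]
        · simp [hN, hq, hpq]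
    rw [Finset.sum_congr rfl fun q _ => this q, Finset.sum_add_distrib, h2]
    simp [hN, hpl]
    ring
  · have hac := h.alpha_count p l hpl
    rw [Nat.card_eq_fintype_card, Fintype.card_subtype] at hac
    have : ∀ q, (N * N.transpose) p q * N q l =
        if (q ∈ {q : P | incid q l ∧ q ≠ p ∧ ∃ l', incid p l' ∧ incid q l'}) then (1 : ℂ) else 0 := by
      intro q
      by_cases hq : incid q l
      · have hpq : p ≠ q := by rintro rfl; exact hpl hq
        by_cases hc : CollinearPts incid p q
        · rw [(h4 p q hpq).1 hc, if_pos ⟨hq, hpq.symm, hc.2⟩]; simp [hN, hq]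
        · rw [(h4 p q hpq).2 hc, if_neg (fun hh => hc ⟨hpq, hh.2.2⟩)]; simp
      · rw [if_neg (fun hh => hq hh.1)]; simp [hN, hq]
    rw [Finset.sum_congr rfl fun q _ => this q, Finset.sum_boole, hac]
    simp [hN, hpl]

theorem pg_aux_core {P L G : Type*} [Fintype P] [Fintype L]
    [Group G] [Fintype G] [MulAction G P] [MulAction G L]
    (incid : P → L → Prop) (s t a : ℕ) (ha : 1 ≤ a)
    (h : IsPartialGeometry incid s t a)
    (hcol : ∀ (g : G) (p q : P), CollinearPts incid (g • p) (g • q) ↔ CollinearPts incid p q)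
    (hfree : ∀ (g : G) (p : P), g • p = p → g = 1)
    (O : P) (x : G) (hx : x ≠ 1) :
    ∃ u : ℤ,
      (Set.ncard {p : P | CollinearPts incid (x • p) p} : ℤ)
          = ((s : ℤ) + 1) * ((t : ℤ) + 1) + u * ((s : ℤ) + t - a + 1) ∧
      (Fintype.card P : ℝ) - (Set.ncard {p : P | CollinearPts incid (x • p) p} : ℝ)
          = (t : ℝ) * ((s : ℝ) + 1) * ((s : ℝ) - a) / a
              - (u : ℝ) * ((s : ℝ) + (t : ℝ) - (a : ℝ) + 1) := by
  classical
  have hxp : ∀ p : P, p ≠ x • p := fun p hp => hx (hfree x p hp.symm)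
  have haR : (a : ℝ) ≠ 0 := by positivity
  have hln : ∀ p : P, ∃ l, incid p l := by
    intro p
    by_contra hne
    push Not at hne
    have := h.point_lines p
    rw [show {l : L | incid p l} = ∅ by ext l; simp [hne l]] at this
    simp at this
  by_cases hall : ∀ p l, incid p l
  · -- every point lies on every line
    have ht : t = 0 := by
      have h1 := h.point_lines O
      have h2 := h.unique_line O (x • O) (hxp O)
      have h3 : {l : L | incid O l}.ncard ≤ 1 := by
        rw [Set.ncard_le_one_iff]
        intro l l' _ _
        exact h2 ⟨hall _ _, hall _ _⟩ ⟨hall _ _, hall _ _⟩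
      rw [Set.ncard_def] at h3
      have h4 : Nat.card {l : L | incid O l} ≤ 1 := by
        rw [Nat.card_coe_set_eq]; exact h3
      omega
    obtain ⟨l, hl⟩ := hln O
    have hv : Fintype.card P = s + 1 := by
      rw [← h.line_points l, ← Nat.card_eq_fintype_card]
      rw [show {p : P | incid p l} = Set.univ by ext p; simp [hall]]
      simp
    have hd : Set.ncard {p : P | CollinearPts incid (x • p) p} = s + 1 := by
      rw [show {p : P | CollinearPts incid (x • p) p} = Set.univ by
        ext p
        simp only [Set.mem_univ, iff_true]
        exact ⟨(hxp p).symm, l, hall _ _, hall _ _⟩]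
      rw [Set.ncard_univ, Nat.card_eq_fintype_card, hv]
    refine ⟨0, ?_, ?_⟩
    · rw [hd, ht]; push_cast; ring
    · rw [hd, hv, ht]; push_cast; ring
  · push Not at hall
    obtain ⟨p0, l0, hpl⟩ := hall
    obtain ⟨h1, h2, h3, h4, h5⟩ := pg_aux_MN incid s t a h _ rfl
    set N : Matrix P L ℂ := Matrix.of fun p l => if incid p l then (1 : ℂ) else 0 with hN
    -- the modulus is positive
    have hac := h.alpha_count p0 l0 hpl
    have has : a ≤ s + 1 := by
      rw [← hac, ← h.line_points l0, Nat.card_coe_set_eq, Nat.card_coe_set_eq]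
      exact Set.ncard_le_ncard (fun q hq => hq.1) (Set.toFinite _)
    have ht : 1 ≤ t := by
      by_contra ht0
      have ht0 : t = 0 := by omega
      have hne : {q : P | incid q l0 ∧ q ≠ p0 ∧ ∃ l', incid p0 l' ∧ incid q l'}.Nonempty := by
        rw [← Set.ncard_pos (Set.toFinite _), ← Nat.card_coe_set_eq, hac]; omega
      obtain ⟨q, hq, hqp, l', hp', hq'⟩ := hne
      have h6 := h.point_lines q
      rw [ht0, Nat.card_coe_set_eq, Set.ncard_eq_one] at h6
      obtain ⟨l1, hl1⟩ := h6
      have e1 : l0 ∈ ({l1} : Set L) := hl1 ▸ hq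
      have e2 : l' ∈ ({l1} : Set L) := hl1 ▸ hq'
      rw [Set.mem_singleton_iff] at e1 e2
      rw [e1, ← e2] at hpl
      exact hpl hp'
    have hm : ((s : ℤ) + t - a + 1) ≠ 0 := by omega
    set J : Matrix P P ℂ := Matrix.of (fun _ _ => (1 : ℂ)) with hJ
    have hM2 : (N * N.transpose) * (N * N.transpose) =
        ((s : ℂ) + t - a + 1) • (N * N.transpose) + ((a : ℂ) * (t + 1)) • J := by
      rw [← Matrix.mul_assoc, h5, Matrix.add_mul, Matrix.smul_mul, Matrix.smul_mul]
      congr 1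
      ext p q
      simp [Matrix.mul_apply, hJ, h1]
    have hMJ : (N * N.transpose) * J = (((s : ℂ) + 1) * (t + 1)) • J := by
      rw [Matrix.mul_assoc]
      have : N.transpose * J = ((s : ℂ) + 1) • Matrix.of (fun _ _ => (1 : ℂ)) := by
        ext l q; simp [Matrix.mul_apply, hJ, h2]
      rw [this, Matrix.mul_smul, ← smul_smul]
      congr 1
      ext p q; simp [Matrix.mul_apply, hJ, h1]
    have hJM : J * (N * N.transpose) = (((s : ℂ) + 1) * (t + 1)) • J := by
      have := congrArg Matrix.transpose hMJ
      have hJt : J.transpose = J := by ext; simp [hJ]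
      simpa [Matrix.transpose_mul, hJt] using this
    have hav : (a : ℂ) * (Fintype.card P : ℂ) = ((s : ℂ) + 1) * (s * t + a) := by
      have e1 : ∑ p, (N * N.transpose * N) p l0 = (((s : ℂ) + 1) * (t + 1)) * (s + 1) := by
        have e2 : ∑ p, (N * N.transpose * N) p l0 = (J * (N * N.transpose) * N) p0 l0 := by
          rw [Matrix.mul_assoc J, Matrix.mul_apply]; simp [hJ]
        rw [e2, hJM, Matrix.smul_mul, Matrix.smul_apply, Matrix.mul_apply]
        simp [hJ, h2]
      rw [h5] at e1
      simp only [Matrix.add_apply, Matrix.smul_apply, Matrix.of_apply, Finset.sum_add_distrib,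
        smul_eq_mul, ← Finset.mul_sum, h2] at e1
      simp at e1
      linear_combination e1
    have hd : ∑ p, (N * N.transpose) p (MulAction.toPerm x p) =
        ((Set.ncard {p : P | CollinearPts incid (x • p) p} : ℤ) : ℂ) := by
      have : ∀ p, (N * N.transpose) p (MulAction.toPerm x p) =
          if p ∈ {p : P | CollinearPts incid (x • p) p} then (1 : ℂ) else 0 := by
        intro p
        have hs : CollinearPts incid (x • p) p ↔ CollinearPts incid p (x • p) :=
          ⟨fun ⟨a, l, b, c⟩ => ⟨a.symm, l, c, b⟩, fun ⟨a, l, b, c⟩ => ⟨a.symm, l, c, b⟩⟩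
        by_cases hc : CollinearPts incid (x • p) p
        · rw [if_pos (show p ∈ {p : P | CollinearPts incid (x • p) p} from hc)]; exact (h4 p _ (hxp p)).1 (hs.1 hc)
        · rw [if_neg (show ¬ p ∈ {p : P | CollinearPts incid (x • p) p} from hc)]; exact (h4 p _ (hxp p)).2 (fun hh => hc (hs.2 hh))
      rw [Finset.sum_congr rfl fun p _ => this p, Finset.sum_boole, ← Nat.card_coe_set_eq,
        Nat.card_eq_fintype_card, Fintype.card_subtype]
      simp
    obtain ⟨u, hu⟩ := pg_aux_abstract (N * N.transpose) (((s : ℤ) + 1) * ((t : ℤ) + 1))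
      ((s : ℤ) + t - a + 1) _ ((a : ℂ) * (t + 1)) hm
      (Fintype.card_pos_iff.2 ⟨O⟩).ne'
      (by push_cast; exact hM2) (by push_cast; exact hMJ) (by push_cast; exact hJM)
      (by push_cast; linear_combination ((t : ℂ) + 1) * hav)
      (MulAction.toPerm x)
      (by
        intro p q
        simp only [MulAction.toPerm_apply]
        by_cases hpq : p = q
        · subst hpq; rw [h3, h3]
        · have hpq' : x • p ≠ x • q := fun hh => hpq (MulAction.injective x hh)
          by_cases hc : CollinearPts incid p q
          · rw [(h4 _ _ hpq).1 hc, (h4 _ _ hpq').1 ((hcol _ _ _).2 hc)]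
          · rw [(h4 _ _ hpq).2 hc, (h4 _ _ hpq').2 (fun hh => hc ((hcol _ _ _).1 hh))])
      hd
    refine ⟨u, hu, ?_⟩
    have huR : (Set.ncard {p : P | CollinearPts incid (x • p) p} : ℝ)
          = ((s : ℝ) + 1) * ((t : ℝ) + 1) + u * ((s : ℝ) + t - a + 1) := by exact_mod_cast hu
    have havN : a * Fintype.card P = (s + 1) * (s * t + a) := by exact_mod_cast hav
    have havR : (a : ℝ) * (Fintype.card P : ℝ) = ((s : ℝ) + 1) * (s * t + a) := by
      exact_mod_cast havN
    have hvR : (Fintype.card P : ℝ) = ((s : ℝ) + 1) * (s * t + a) / a := by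
      field_simp; linear_combination havR
    rw [huR, hvR]
    field_simp
    ring

/-- Let `G` act regularly on the point set of a partial geometry of order `(s,t,α)`;
fix a point `O` and let `Δ = {g : O^g` collinear with `O} ∪ {1}`.  Then for every
nontrivial `x ∈ G` there is an integer `u` such that the number `d₁(x)` of points
mapped by `x` to distinct collinear points satisfies
`d₁(x) = (s+1)(t+1) + u(s+t-α+1) = |x^G ∩ Δ|⬝|C_G(x)|`, and moreover
`|x^G ∩ Δᶜ|⬝|C_G(x)| = t(s+1)(s-α)/α - u(s+t-α+1)`. -/
theorem partialGeometry_regular_action_counts {P L G : Type*} [Fintype P] [Fintype L]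
    [Group G] [Fintype G] [MulAction G P] [MulAction G L]
    (incid : P → L → Prop) (s t a : ℕ) (ha : 1 ≤ a)
    (h : IsPartialGeometry incid s t a)
    (hpres : ∀ (g : G) (p : P) (l : L), incid p l ↔ incid (g • p) (g • l))
    (htrans : ∀ p q : P, ∃ g : G, g • p = q)
    (hfree : ∀ (g : G) (p : P), g • p = p → g = 1)
    (O : P) (x : G) (hx : x ≠ 1) :
    ∃ u : ℤ,
      (Set.ncard {p : P | CollinearPts incid (x • p) p} : ℤ)
          = ((s : ℤ) + 1) * ((t : ℤ) + 1) + u * ((s : ℤ) + t - a + 1) ∧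
      Set.ncard {p : P | CollinearPts incid (x • p) p}
          = Set.ncard ({y : G | ∃ g : G, g * x * g⁻¹ = y} ∩
              ({g : G | CollinearPts incid (g • O) O} ∪ {1})) *
            Nat.card ↥(Subgroup.centralizer ({x} : Set G)) ∧
      ((Set.ncard ({y : G | ∃ g : G, g * x * g⁻¹ = y} ∩
              (({g : G | CollinearPts incid (g • O) O} ∪ {1}) : Set G)ᶜ) *
          Nat.card ↥(Subgroup.centralizer ({x} : Set G)) : ℕ) : ℝ)
          = (t : ℝ) * ((s : ℝ) + 1) * ((s : ℝ) - a) / a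
              - (u : ℝ) * ((s : ℝ) + (t : ℝ) - (a : ℝ) + 1) := by
    classical
  have hcol : ∀ (g : G) (p q : P),
      CollinearPts incid (g • p) (g • q) ↔ CollinearPts incid p q := by
    intro g p q
    constructor
    · rintro ⟨hne, l, hp, hq⟩
      refine ⟨fun hh => hne (by rw [hh]), g⁻¹ • l, ?_, ?_⟩
      · rw [hpres g, smul_inv_smul]; exact hp
      · rw [hpres g, smul_inv_smul]; exact hq
    · rintro ⟨hne, l, hp, hq⟩
      exact ⟨fun hh => hne (MulAction.injective g hh), g • l, (hpres g p l).1 hp, (hpres g q l).1 hq⟩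
  obtain ⟨u, hu1, hu2⟩ := pg_aux_core incid s t a ha h hcol hfree O x hx
  -- the orbit map is a bijection
  have hbij : Function.Bijective (fun g : G => g⁻¹ • O) := by
    constructor
    · intro g g' hgg
      have : (g * g'⁻¹) • O = O := by
        have h1 : g⁻¹ • O = g'⁻¹ • O := hgg
        rw [mul_smul, ← h1, smul_inv_smul]
      have := hfree _ _ this
      exact mul_inv_eq_one.1 this
    · intro q
      obtain ⟨g, hg⟩ := htrans O q
      exact ⟨g⁻¹, by simpa using hg⟩
  have hcard : Fintype.card P = Fintype.card G := (Fintype.card_of_bijective hbij).symm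
  have hkey : ∀ g : G, g * x * g⁻¹ ∈ ({g : G | CollinearPts incid (g • O) O} ∪ {1} : Set G) ↔
      CollinearPts incid (x • (g⁻¹ • O)) (g⁻¹ • O) := by
    intro g
    have h1 : g * x * g⁻¹ ≠ 1 := by
      intro hh
      apply hx
      have : x = g⁻¹ * (g * x * g⁻¹) * g := by group
      rw [this, hh]; group
    rw [← hcol g (x • (g⁻¹ • O)) (g⁻¹ • O), smul_inv_smul, ← mul_smul, ← mul_smul]
    constructor
    · rintro (hh | hh)
      · exact hh
      · exact absurd hh h1
    · intro hh
      left
      exact hh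
  have hcnt := pg_aux_conj_count x ({g : G | CollinearPts incid (g • O) O} ∪ {1})
  have hcnt' := pg_aux_conj_count x ({g : G | CollinearPts incid (g • O) O} ∪ {1})ᶜ
  have hd : Set.ncard {p : P | CollinearPts incid (x • p) p} =
      Set.ncard {g : G | g * x * g⁻¹ ∈ ({g : G | CollinearPts incid (g • O) O} ∪ {1} : Set G)} := by
    symm
    rw [← Set.ncard_image_of_injective _ hbij.1]
    congr 1
    ext p
    constructor
    · rintro ⟨g, hg, rfl⟩
      exact (hkey g).1 hg
    · intro hp
      obtain ⟨g, rfl⟩ := hbij.2 p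
      exact ⟨g, (hkey g).2 hp, rfl⟩
  refine ⟨u, hu1, hd.trans hcnt, ?_⟩
  rw [← hu2, ← hcnt', hd, hcard]
  have hsum := Set.ncard_add_ncard_compl
    {g : G | g * x * g⁻¹ ∈ ({g : G | CollinearPts incid (g • O) O} ∪ {1} : Set G)}
  rw [Nat.card_eq_fintype_card] at hsum
  rw [← hsum]
  push_cast
  rw [add_sub_cancel_left]
  rfl
end

section
/- Let p be a prime and G a nontrivial finite p-group of order v, and suppose (v,k,λ,μ) are parameters of a non-conference strongly regular graph with integer eigenvalues ν₂ > ν₃ such that ν₂ − ν₃ divides neither μ − ν₃(ν₂+1) nor v − 2k + λ − ν₃(ν₂+1). Then there is no regular (v,k,λ,μ)-partial difference set in G. -/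
/-- `S` is a regular `(v,k,λ,μ)`-partial difference set in the finite group `G`:
`|G| = v`, `|S| = k`, `1 ∉ S`, `S = S⁻¹`, and every nonidentity element `g` has
exactly `λ` representations `g = a * b⁻¹` with `a, b ∈ S` if `g ∈ S`, and exactly
`μ` such representations if `g ∉ S`. -/
def IsRegularPDS {G : Type*} [Group G] [Fintype G] [DecidableEq G]
    (S : Finset G) (v k l m : ℕ) : Prop :=
  Fintype.card G = v ∧ S.card = k ∧ (1 : G) ∉ S ∧ (∀ s : G, s ∈ S ↔ s⁻¹ ∈ S) ∧
    (∀ g ∈ S, ((S ×ˢ S).filter (fun p => p.1 * p.2⁻¹ = g)).card = l) ∧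
    (∀ g : G, g ∉ S → g ≠ 1 → ((S ×ˢ S).filter (fun p => p.1 * p.2⁻¹ = g)).card = m)

open Matrix in
/-- The trace of a complex matrix with `Y ^ (n + 1) = Y` is an algebraic integer. -/
theorem aux_integral_trace {G : Type*} [Fintype G] [DecidableEq G] (Y : Matrix G G ℂ) (n : ℕ)
    (hn : 0 < n) (hY : Y ^ (n + 1) = Y) : IsIntegral ℤ Y.trace := by
  rw [Matrix.trace_eq_sum_roots_charpoly]
  apply IsIntegral.multiset_sum
  intro y hy
  have h1 : y ∈ spectrum ℂ Y := by
    rw [Matrix.mem_spectrum_iff_isRoot_charpoly]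
    exact Polynomial.isRoot_of_mem_roots hy
  have h2 : y ^ (n + 1) = y := by
    have h3 := spectrum.subset_polynomial_aeval Y (Polynomial.X ^ (n + 1) - Polynomial.X : Polynomial ℂ)
    have h4 := h3 ⟨y, h1, rfl⟩
    have h5 : (Polynomial.aeval Y) (Polynomial.X ^ (n + 1) - Polynomial.X : Polynomial ℂ) = 0 := by
      simp [hY]
    rw [h5] at h4
    by_contra hne
    have h6 : y ^ (n + 1) - y ≠ 0 := sub_ne_zero.mpr hne
    simp only [Polynomial.eval_sub, Polynomial.eval_pow, Polynomial.eval_X] at h4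
    apply h4
    rw [spectrum.mem_resolventSet_iff, sub_zero]
    exact (IsUnit.mk0 _ h6).map (algebraMap ℂ (Matrix G G ℂ))
  refine ⟨Polynomial.X ^ (n + 1) - Polynomial.X, ?_, ?_⟩
  · apply Polynomial.monic_X_pow_sub
    rw [Polynomial.degree_X]
    exact_mod_cast Nat.succ_lt_succ hn
  · simp [h2]

theorem aux_dvd (d a : ℤ) (hd : d ≠ 0) (h : IsIntegral ℤ ((a : ℂ) / d)) : d ∣ a := by
  have h1 : IsIntegral ℤ ((a : ℚ) / d) := by
    have : ((a : ℂ) / d) = algebraMap ℚ ℂ ((a : ℚ) / d) := by simp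
    rw [this] at h
    exact (isIntegral_algebraMap_iff (algebraMap ℚ ℂ).injective).mp h
  obtain ⟨y, hy⟩ := IsIntegrallyClosed.isIntegral_iff.mp h1
  refine ⟨y, ?_⟩
  have hd' : (d : ℚ) ≠ 0 := by exact_mod_cast hd
  rw [eq_div_iff hd'] at hy
  have : (y : ℚ) * d = a := by simpa using hy
  have : y * d = a := by exact_mod_cast this
  linarith

open Matrix in
theorem aux_main {G : Type*} [Group G] [Fintype G] [DecidableEq G]
    (S : Finset G) (v k l m : ℕ) (hS : IsRegularPDS S v k l m) (a b : ℤ) (hab : a - b ≠ 0)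
    (hsum : a + b = l - m) (hprod : a * b = m - k) (x : G) (hx1 : x ≠ 1)
    (hx : ∀ g, x * g = g * x) :
    a - b ∣ (if x ∈ S then (v : ℤ) else 0) - (k - b) := by
  obtain ⟨hv, hk, h1, hinv, hl, hm⟩ := hS
  let A : Matrix G G ℂ := Matrix.of fun g h => if g * h⁻¹ ∈ S then 1 else 0
  let J : Matrix G G ℂ := Matrix.of fun _ _ => 1
  let P : Matrix G G ℂ := Matrix.of fun g h => if x * g = h then 1 else 0
  have hv0 : (v : ℂ) ≠ 0 := by
    rw [← hv]; exact_mod_cast Fintype.card_ne_zero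
  have hJJ : J * J = (v : ℂ) • J := by
    ext g h
    simp [J, Matrix.mul_apply, hv]
  have hAJ : A * J = (k : ℂ) • J := by
    ext g h
    simp only [A, J, Matrix.mul_apply, Matrix.of_apply, mul_one, Matrix.smul_apply, smul_eq_mul]
    rw [Fintype.sum_equiv ((Equiv.inv G).trans (Equiv.mulLeft g)) _ (fun y => if y ∈ S then (1:ℂ) else 0)
      (by intro y; simp)]
    simp [hk]
  have hJA : J * A = (k : ℂ) • J := by
    ext g h
    simp only [A, J, Matrix.mul_apply, Matrix.of_apply, one_mul, Matrix.smul_apply, smul_eq_mul]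
    rw [Fintype.sum_equiv (Equiv.mulRight h⁻¹) (fun j => if j * h⁻¹ ∈ S then (1:ℂ) else 0)
      (fun y => if y ∈ S then (1:ℂ) else 0) (fun y => rfl)]
    simp [hk]
  have hPM : ∀ M : Matrix G G ℂ, ∀ g h, (P * M) g h = M (x * g) h := by
    intro M g h
    simp [P, Matrix.mul_apply]
  have hMP : ∀ M : Matrix G G ℂ, ∀ g h, (M * P) g h = M g (x⁻¹ * h) := by
    intro M g h
    have : ∀ u, (x * u = h) ↔ (u = x⁻¹ * h) := fun u => by rw [eq_inv_mul_iff_mul_eq]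
    simp [P, Matrix.mul_apply, this]
  have hPA : P * A = A * P := by
    ext g h
    rw [hPM, hMP]
    have : x * g * h⁻¹ = g * (x⁻¹ * h)⁻¹ := by
      rw [_root_.mul_inv_rev, inv_inv, ← hx, ← mul_assoc, hx g]
    simp [A, this]
  have hPJ : P * J = J * P := by
    ext g h
    rw [hPM, hMP]
    simp [J]
  have hAA : A * A = ((k : ℂ) - m) • (1 : Matrix G G ℂ) + ((l : ℂ) - m) • A + (m : ℂ) • J := by
    ext g h
    have hcount : (A * A) g h =
        (((S ×ˢ S).filter (fun p => p.1 * p.2⁻¹ = g * h⁻¹)).card : ℂ) := by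
      simp only [A, Matrix.mul_apply, Matrix.of_apply, ← ite_and, mul_ite, mul_one, mul_zero]
      rw [Finset.sum_boole]
      congr 1
      apply Finset.card_bij (fun u _ => (g * u⁻¹, h * u⁻¹))
      · intro u hu
        simp only [Finset.mem_filter, Finset.mem_univ, true_and, Finset.mem_product] at hu ⊢
        refine ⟨⟨hu.2, ?_⟩, by group⟩
        rw [hinv]; simpa using hu.1
      · intro u _ w _ h
        simpa using h
      · rintro ⟨c, d⟩ hcd
        simp only [Finset.mem_filter, Finset.mem_univ, true_and, Finset.mem_product] at hcd ⊢
        obtain ⟨⟨hc, hd⟩, he⟩ := hcd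
        have e1 : g * (d⁻¹ * h)⁻¹ = c := by
          rw [_root_.mul_inv_rev, inv_inv, ← mul_assoc, ← he]; group
        refine ⟨d⁻¹ * h, ⟨?_, ?_⟩, ?_⟩
        · rw [mul_assoc, mul_inv_cancel, mul_one, ← hinv]; exact hd
        · rw [e1]; exact hc
        · rw [e1]; simp
    rw [hcount]
    simp only [A, J, Matrix.add_apply, Matrix.smul_apply, Matrix.of_apply, Matrix.one_apply,
      smul_eq_mul]
    by_cases hgh : g = h
    · subst hgh
      have : ((S ×ˢ S).filter (fun p => p.1 * p.2⁻¹ = g * g⁻¹)).card = k := by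
        rw [← hk]
        symm
        apply Finset.card_bij (fun u _ => (u, u))
        · intro u hu; simp [hu]
        · intro u _ w _ h; simpa using h
        · rintro ⟨c, d⟩ hcd
          simp only [Finset.mem_filter, Finset.mem_product, mul_inv_cancel, mul_inv_eq_one] at hcd
          obtain ⟨⟨hc, hd⟩, rfl⟩ := hcd
          exact ⟨c, hc, rfl⟩
      rw [this]
      simp [h1]
    · by_cases hs : g * h⁻¹ ∈ S
      · rw [hl _ hs]; simp [hs, hgh]
      · rw [hm _ hs (by rwa [Ne, mul_inv_eq_one])]; simp [hs, hgh]
  have hcnt : (k : ℂ) * k = (k - m) + (l - m) * k + m * v := by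
    have h2 : A * A * J = A * (A * J) := mul_assoc _ _ _
    rw [hAA, hAJ, add_mul, add_mul, smul_mul_assoc, smul_mul_assoc, smul_mul_assoc, hAJ, hJJ,
      mul_smul_comm, hAJ, one_mul] at h2
    have h3 := congrFun (congrFun h2 1) 1
    simp [J] at h3
    linear_combination -h3
  have hsumC : (a : ℂ) + b = l - m := by exact_mod_cast congrArg (Int.cast : ℤ → ℂ) hsum
  have hprodC : (a : ℂ) * b = m - k := by exact_mod_cast congrArg (Int.cast : ℤ → ℂ) hprod
  have hdC : (a : ℂ) - b ≠ 0 := by exact_mod_cast hab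
  let F : Matrix G G ℂ := A - (b : ℂ) • (1 : Matrix G G ℂ) - (((k : ℂ) - b) / v) • J
  let E : Matrix G G ℂ := ((a : ℂ) - b)⁻¹ • F
  have hFF : F * F = ((a : ℂ) - b) • F := by
    simp only [F, sub_mul, mul_sub, smul_mul_assoc, mul_smul_comm, one_mul, mul_one, hAA, hAJ,
      hJA, hJJ]
    match_scalars
    · linear_combination hprodC
    · linear_combination -hsumC
    · field_simp
      linear_combination -hcnt + k * hsumC - hprodC
  have hEE : E * E = E := by
    simp only [E, smul_mul_assoc, mul_smul_comm, hFF]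
    rw [smul_smul, smul_smul, mul_assoc, inv_mul_cancel₀ hdC, mul_one]
  have hPE : Commute P E := by
    have : Commute P F :=
      ((show Commute P A from hPA).sub_right ((Commute.one_right P).smul_right _)).sub_right
        ((show Commute P J from hPJ).smul_right _)
    exact this.smul_right _
  have hPpow : ∀ n : ℕ, ∀ g h, (P ^ n) g h = if x ^ n * g = h then 1 else 0 := by
    intro n
    induction n with
    | zero => intro g h; simp [Matrix.one_apply]
    | succ n ih =>
      intro g h
      rw [pow_succ', hPM, ih, pow_succ, mul_assoc]
  have hPn : P ^ (orderOf x) = 1 := by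
    ext g h
    rw [hPpow, pow_orderOf_eq_one, one_mul, Matrix.one_apply]
  have hY : (P * E) ^ (orderOf x + 1) = P * E := by
    rw [hPE.mul_pow, pow_succ P, hPn, one_mul]
    congr 1
    exact IsIdempotentElem.pow_succ_eq _ hEE
  have hint := aux_integral_trace (P * E) (orderOf x) (orderOf_pos x) hY
  apply aux_dvd _ _ hab
  convert hint using 1
  have htr : ∀ g, (P * E) g g =
      ((a : ℂ) - b)⁻¹ * ((if x ∈ S then 1 else 0) - ((k : ℂ) - b) / v) := by
    intro g
    rw [hPM]
    simp [E, F, A, J, hx1]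
  simp only [Matrix.trace, Matrix.diag_apply, htr, Finset.sum_const, Finset.card_univ, hv,
    nsmul_eq_mul]
  split_ifs <;> push_cast <;> field_simp <;> ring

/-- Let `p` be a prime and `G` a nontrivial finite `p`-group of order `v`, and
suppose `(v,k,λ,μ)` are parameters of a non-conference strongly regular graph with
integer eigenvalues `ν₂ > ν₃` such that `ν₂ - ν₃` divides neither
`μ - ν₃(ν₂+1)` nor `v - 2k + λ - ν₃(ν₂+1)`.  Then there is no regular
`(v,k,λ,μ)`-partial difference set in `G`. -/
theorem no_pds_in_p_group {G : Type*} [Group G] [Fintype G] [DecidableEq G]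
    [Nontrivial G] (p : ℕ) (hp : p.Prime) (hpG : IsPGroup p G)
    (v k l m : ℕ) (ν₂ ν₃ : ℤ)
    (hv : Fintype.card G = v)
    (hconf : ¬ (2 * (k : ℤ) = (v : ℤ) - 1 ∧ 4 * (l : ℤ) = (v : ℤ) - 5 ∧
      4 * (m : ℤ) = (v : ℤ) - 1))
    (hν₂ : (ν₂ : ℝ) = ((l : ℝ) - m + Real.sqrt (((l : ℝ) - m) ^ 2 + 4 * ((k : ℝ) - m))) / 2)
    (hν₃ : (ν₃ : ℝ) = ((l : ℝ) - m - Real.sqrt (((l : ℝ) - m) ^ 2 + 4 * ((k : ℝ) - m))) / 2)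
    (h23 : ν₂ > ν₃)
    (hd1 : ¬ (ν₂ - ν₃ ∣ (m : ℤ) - ν₃ * (ν₂ + 1)))
    (hd2 : ¬ (ν₂ - ν₃ ∣ (v : ℤ) - 2 * k + l - ν₃ * (ν₂ + 1))) :
    ¬ ∃ S : Finset G, IsRegularPDS S v k l m := by
  rintro ⟨S, hS⟩
  set D : ℝ := ((l : ℝ) - m) ^ 2 + 4 * ((k : ℝ) - m) with hD
  have h23R : (ν₃ : ℝ) < ν₂ := by exact_mod_cast h23
  have hs : 0 < Real.sqrt D := by linarith
  have hsq : Real.sqrt D * Real.sqrt D = D := Real.mul_self_sqrt (Real.sqrt_pos.mp hs).le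
  have hsum : ν₂ + ν₃ = (l : ℤ) - m := by
    have : (ν₂ : ℝ) + ν₃ = (l : ℝ) - m := by rw [hν₂, hν₃]; ring
    exact_mod_cast this
  have hprod : ν₂ * ν₃ = (m : ℤ) - k := by
    have : (ν₂ : ℝ) * ν₃ = (m : ℝ) - k := by
      rw [hν₂, hν₃]; linear_combination -hsq / 4 - hD / 4
    exact_mod_cast this
  have : Fact p.Prime := ⟨hp⟩
  have := hpG.center_nontrivial
  obtain ⟨⟨x, hxc⟩, hx1⟩ := exists_ne (1 : Subgroup.center G)
  have hx1' : x ≠ 1 := fun h => hx1 (Subtype.ext h)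
  have hmain := aux_main S v k l m hS ν₂ ν₃ (by omega) hsum hprod x hx1'
    (fun g => (Subgroup.mem_center_iff.mp hxc g).symm)
  split_ifs at hmain with hxS
  · apply hd2
    have e : (v : ℤ) - 2 * k + l - ν₃ * (ν₂ + 1) = (v - (k - ν₃)) + (ν₂ - ν₃) := by
      linear_combination -hsum - hprod
    rw [e]
    exact dvd_add hmain dvd_rfl
  · apply hd1
    have e : (m : ℤ) - ν₃ * (ν₂ + 1) = -(0 - (k - ν₃)) := by
      linear_combination -hprod
    rw [e]
    exact (dvd_neg).mpr hmain
end
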